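/- Let a > 0 and 0 < L ≤ πa. Let ψ : [0,L] → ℝ be continuously differentiable with ψ(L) = 0, and assume that r ↦ ψ(r)²/r is integrable on (0,L). Then ∫_0^L [ r·ψ'(r)² + ( 1/(4r) − r/(4a²) )·ψ(r)² ] dr ≥ 0. -/

import Mathlib

open Real MeasureTheory intervalIntegral

/-!
Put `f r = √r • ψ r`. Then `‖f'‖² = r ‖ψ'‖² + ‖ψ‖² / (4 r) + (‖ψ‖² / 2)'`, so, up to the boundary
term `‖ψ 0‖² / 2 ≥ 0`, the form is `∫ (‖f'‖² - ‖f‖² / (4 a²))`. The weight makes `f` vanish at `0`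
as well as at `L`, so the Poincaré inequality with both ends fixed applies; its constant `(π / L)²`
is four times the one-sided constant and covers the range `L ≤ 2 π a`.

The Poincaré inequality itself is a completion of the square: if `w' = -k² - w²`, then
`‖f'‖² - k² ‖f‖² = ‖f' - w • f‖² + (w ‖f‖²)'`. A solution `w` exists on every interval of length
less than `π / k`, and the critical length is reached by letting `k` tend to it.
-/

section Poincare

variable {E : Type*} [NormedAddCommGroup E] [InnerProductSpace ℝ E]
variable {a b k : ℝ} {f f' : ℝ → E}

theorem mul_norm_sq_add_mul_inner_le (w w' : ℝ) (u v : E) :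
    w' * ‖u‖ ^ 2 + w * (2 * inner ℝ u v) ≤ ‖v‖ ^ 2 + (w' + w ^ 2) * ‖u‖ ^ 2 := by
  have expand : ‖v - w • u‖ ^ 2 = ‖v‖ ^ 2 - 2 * w * inner ℝ u v + w ^ 2 * ‖u‖ ^ 2 := by
    rw [norm_sub_sq_real, inner_smul_right, real_inner_comm, norm_smul, mul_pow, norm_eq_abs,
      sq_abs]
    ring
  linarith [sq_nonneg ‖v - w • u‖]

theorem riccati_boundary_le_integral {w w' : ℝ → ℝ} (hab : a ≤ b)
    (hw : ContinuousOn w (Set.Icc a b)) (hw' : ∀ x ∈ Set.Ioo a b, HasDerivAt w (w' x) x)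
    (hf : ContinuousOn f (Set.Icc a b)) (hf' : ∀ x ∈ Set.Ioo a b, HasDerivAt f (f' x) x)
    (hint : IntervalIntegrable (fun x ↦ ‖f' x‖ ^ 2 + (w' x + w x ^ 2) * ‖f x‖ ^ 2) volume a b) :
    w b * ‖f b‖ ^ 2 - w a * ‖f a‖ ^ 2 ≤
      ∫ x in a..b, (‖f' x‖ ^ 2 + (w' x + w x ^ 2) * ‖f x‖ ^ 2) :=
  sub_le_integral_of_hasDeriv_right_of_le hab (hw.mul (hf.norm.pow 2))
    (fun x hx ↦ ((hw' x hx).mul (hf' x hx).norm_sq).hasDerivWithinAt)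
    ((intervalIntegrable_iff_integrableOn_Icc_of_le hab).1 hint)
    fun x _ ↦ mul_norm_sq_add_mul_inner_le (w x) (w' x) (f x) (f' x)

theorem hasDerivAt_neg_mul_tan {c x : ℝ} (hx : cos (k * (x - c)) ≠ 0) :
    HasDerivAt (fun y ↦ -k * tan (k * (y - c)))
      (-k ^ 2 - (-k * tan (k * (x - c))) ^ 2) x := by
  have inner_deriv : HasDerivAt (fun y ↦ k * (y - c)) k x := by
    simpa using ((hasDerivAt_id x).sub_const c).const_mul k
  refine (((hasDerivAt_tan hx).comp x inner_deriv).const_mul (-k)).congr_deriv ?_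
  rw [one_div, ← inv_one_add_tan_sq hx, inv_inv]
  ring

theorem cos_mul_sub_midpoint_pos (hk : 0 ≤ k) (hkab : k * (b - a) < π) {x : ℝ}
    (hx : x ∈ Set.Icc a b) : 0 < cos (k * (x - (a + b) / 2)) := by
  have dist_left_nonneg : 0 ≤ k * (x - a) := mul_nonneg hk (sub_nonneg.2 hx.1)
  have dist_right_nonneg : 0 ≤ k * (b - x) := mul_nonneg hk (sub_nonneg.2 hx.2)
  exact cos_pos_of_mem_Ioo ⟨by linarith, by linarith⟩

theorem sq_mul_integral_norm_sq_le_integral_norm_deriv_sq_of_mul_lt_pi (hab : a ≤ b) (hk : 0 ≤ k)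
    (hkab : k * (b - a) < π) (hf : ContinuousOn f (Set.Icc a b))
    (hf' : ∀ x ∈ Set.Ioo a b, HasDerivAt f (f' x) x)
    (hint : IntervalIntegrable (fun x ↦ ‖f' x‖ ^ 2) volume a b) (hfa : f a = 0) (hfb : f b = 0) :
    k ^ 2 * ∫ x in a..b, ‖f x‖ ^ 2 ≤ ∫ x in a..b, ‖f' x‖ ^ 2 := by
  have hw' : ∀ x ∈ Set.Icc a b, HasDerivAt (fun y ↦ -k * tan (k * (y - (a + b) / 2)))
      (-k ^ 2 - (-k * tan (k * (x - (a + b) / 2))) ^ 2) x := fun x hx ↦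
    hasDerivAt_neg_mul_tan (cos_mul_sub_midpoint_pos hk hkab hx).ne'
  have hf_int : IntervalIntegrable (fun x ↦ k ^ 2 * ‖f x‖ ^ 2) volume a b :=
    ((hf.norm.pow 2).intervalIntegrable_of_Icc hab).const_mul _
  have boundary_le := riccati_boundary_le_integral hab (HasDerivAt.continuousOn hw')
    (fun x hx ↦ hw' x (Set.Ioo_subset_Icc_self hx)) hf hf'
    (by simpa [← sub_eq_add_neg] using hint.sub hf_int)
  simp only [hfa, hfb, norm_zero, sub_add_cancel, neg_mul (k ^ 2), ← sub_eq_add_neg,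
    integral_sub hint hf_int, intervalIntegral.integral_const_mul] at boundary_le
  linarith

theorem pi_div_sq_mul_integral_norm_sq_le_integral_norm_deriv_sq (hab : a < b)
    (hf : ContinuousOn f (Set.Icc a b)) (hf' : ∀ x ∈ Set.Ioo a b, HasDerivAt f (f' x) x)
    (hint : IntervalIntegrable (fun x ↦ ‖f' x‖ ^ 2) volume a b) (hfa : f a = 0) (hfb : f b = 0) :
    (π / (b - a)) ^ 2 * ∫ x in a..b, ‖f x‖ ^ 2 ≤ ∫ x in a..b, ‖f' x‖ ^ 2 := by
  have hlen : 0 < b - a := sub_pos.2 hab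
  have tendsto_critical : Filter.Tendsto (fun k : ℝ ↦ k ^ 2 * ∫ x in a..b, ‖f x‖ ^ 2)
      (nhdsWithin (π / (b - a)) (Set.Iio (π / (b - a))))
      (nhds ((π / (b - a)) ^ 2 * ∫ x in a..b, ‖f x‖ ^ 2)) :=
    (Continuous.tendsto (by fun_prop) _).mono_left nhdsWithin_le_nhds
  refine le_of_tendsto tendsto_critical ?_
  filter_upwards [Ioo_mem_nhdsLT (div_pos pi_pos hlen)] with k hk
  exact sq_mul_integral_norm_sq_le_integral_norm_deriv_sq_of_mul_lt_pi hab.le hk.1.le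
    ((lt_div_iff₀ hlen).1 hk.2) hf hf' hint hfa hfb

end Poincare

section RadialWeight

theorem norm_sq_sqrt_smul {F : Type*} [SeminormedAddCommGroup F] [NormedSpace ℝ F]
    {r : ℝ} (hr : 0 ≤ r) (u : F) : ‖√r • u‖ ^ 2 = r * ‖u‖ ^ 2 := by
  rw [norm_smul, mul_pow, norm_eq_abs, sq_abs, sq_sqrt hr]

theorem intervalIntegrable_radial_energy {F : Type*} [SeminormedAddCommGroup F] {L : ℝ}
    {ψ ψ' : ℝ → F} (hL : 0 ≤ L) (hψ'c : ContinuousOn ψ' (Set.Icc 0 L))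
    (hint : IntervalIntegrable (fun r ↦ ‖ψ r‖ ^ 2 / r) volume 0 L) :
    IntervalIntegrable (fun r ↦ r * ‖ψ' r‖ ^ 2 + 1 / 4 * (‖ψ r‖ ^ 2 / r)) volume 0 L :=
  ((continuousOn_id.mul (hψ'c.norm.pow 2)).intervalIntegrable_of_Icc hL).add (hint.const_mul _)

variable {E : Type*} [NormedAddCommGroup E] [InnerProductSpace ℝ E]
variable {L : ℝ} {ψ ψ' : ℝ → E}

theorem norm_sq_deriv_sqrt_smul {r : ℝ} (hr : 0 < r) (u v : E) :
    ‖√r • v + (1 / (2 * √r)) • u‖ ^ 2 = r * ‖v‖ ^ 2 + 1 / 4 * (‖u‖ ^ 2 / r) + inner ℝ u v := by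
  have hsqrt : √r ≠ 0 := (sqrt_pos.2 hr).ne'
  rw [norm_add_sq_real, norm_sq_sqrt_smul hr.le, real_inner_smul_left, real_inner_smul_right,
    real_inner_comm, norm_smul, mul_pow, norm_eq_abs, sq_abs, div_pow, mul_pow, sq_sqrt hr.le]
  field_simp
  ring

theorem integral_inner_deriv {a b : ℝ} (hab : a ≤ b) (hψ : ContinuousOn ψ (Set.Icc a b))
    (hψ' : ∀ x ∈ Set.Ioo a b, HasDerivAt ψ (ψ' x) x)
    (hint : IntervalIntegrable (fun x ↦ inner ℝ (ψ x) (ψ' x)) volume a b) :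
    ∫ x in a..b, inner ℝ (ψ x) (ψ' x) = ‖ψ b‖ ^ 2 / 2 - ‖ψ a‖ ^ 2 / 2 :=
  integral_eq_sub_of_hasDerivAt_of_le hab ((hψ.norm.pow 2).div_const 2)
    (fun x hx ↦ ((hψ' x hx).norm_sq.div_const 2).congr_deriv (by ring)) hint

theorem pi_div_sq_mul_integral_mul_norm_sq_le_radial_energy (hL : 0 < L)
    (hψ : ContinuousOn ψ (Set.Icc 0 L)) (hψ' : ∀ r ∈ Set.Ioo 0 L, HasDerivAt ψ (ψ' r) r)
    (hψ'c : ContinuousOn ψ' (Set.Icc 0 L)) (hψL : ψ L = 0)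
    (hint : IntervalIntegrable (fun r ↦ ‖ψ r‖ ^ 2 / r) volume 0 L) :
    (π / L) ^ 2 * ∫ r in (0 : ℝ)..L, r * ‖ψ r‖ ^ 2 ≤
      ∫ r in (0 : ℝ)..L, (r * ‖ψ' r‖ ^ 2 + 1 / 4 * (‖ψ r‖ ^ 2 / r)) := by
  have energy_int := intervalIntegrable_radial_energy hL.le hψ'c hint
  have inner_int : IntervalIntegrable (fun r ↦ inner ℝ (ψ r) (ψ' r)) volume 0 L :=
    (hψ.inner hψ'c).intervalIntegrable_of_Icc hL.le
  have norm_sq_deriv : Set.EqOn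
      (fun r ↦ r * ‖ψ' r‖ ^ 2 + 1 / 4 * (‖ψ r‖ ^ 2 / r) + inner ℝ (ψ r) (ψ' r))
      (fun r ↦ ‖√r • ψ' r + (1 / (2 * √r)) • ψ r‖ ^ 2) (Set.Ioo 0 L) := fun r hr ↦
    (norm_sq_deriv_sqrt_smul hr.1 (ψ r) (ψ' r)).symm
  have poincare := pi_div_sq_mul_integral_norm_sq_le_integral_norm_deriv_sq hL
    (f := fun r ↦ √r • ψ r) (continuous_sqrt.continuousOn.smul hψ)
    (fun r hr ↦ (hasDerivAt_sqrt hr.1.ne').smul (hψ' r hr))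
    ((energy_int.add inner_int).congr_uIoo (Set.uIoo_of_le hL.le ▸ norm_sq_deriv))
    (by simp) (by simp [hψL])
  calc (π / L) ^ 2 * ∫ r in (0 : ℝ)..L, r * ‖ψ r‖ ^ 2
      = (π / (L - 0)) ^ 2 * ∫ r in (0 : ℝ)..L, ‖√r • ψ r‖ ^ 2 := by
        rw [sub_zero, integral_congr_Ioo_of_le hL.le fun r hr ↦ norm_sq_sqrt_smul hr.1.le (ψ r)]
    _ ≤ ∫ r in (0 : ℝ)..L, ‖√r • ψ' r + (1 / (2 * √r)) • ψ r‖ ^ 2 := poincare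
    _ = (∫ r in (0 : ℝ)..L, (r * ‖ψ' r‖ ^ 2 + 1 / 4 * (‖ψ r‖ ^ 2 / r))) - ‖ψ 0‖ ^ 2 / 2 := by
        rw [← integral_congr_Ioo_of_le hL.le norm_sq_deriv, integral_add energy_int inner_int,
          integral_inner_deriv hL.le hψ hψ' inner_int, hψL, norm_zero]
        ring
    _ ≤ ∫ r in (0 : ℝ)..L, (r * ‖ψ' r‖ ^ 2 + 1 / 4 * (‖ψ r‖ ^ 2 / r)) :=
        sub_le_self _ (by positivity)

theorem angular_section_nonneg_general {a : ℝ} (hL : 0 < L) (hLa : L ≤ 2 * π * a)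
    (hψ : ContinuousOn ψ (Set.Icc 0 L)) (hψ' : ∀ r ∈ Set.Ioo 0 L, HasDerivAt ψ (ψ' r) r)
    (hψ'c : ContinuousOn ψ' (Set.Icc 0 L)) (hψL : ψ L = 0)
    (hint : IntervalIntegrable (fun r ↦ ‖ψ r‖ ^ 2 / r) volume 0 L) :
    0 ≤ ∫ r in (0 : ℝ)..L,
      (r * ‖ψ' r‖ ^ 2 + (1 / (4 * r) - r / (4 * a ^ 2)) * ‖ψ r‖ ^ 2) := by
  have ha : 0 < a := pos_of_mul_pos_right (hL.trans_le hLa) (by positivity)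
  have inv_le : 1 / (2 * a) ≤ π / L := by
    rw [div_le_div_iff₀ (by positivity) hL]
    linarith
  have mass_nonneg : 0 ≤ ∫ r in (0 : ℝ)..L, r * ‖ψ r‖ ^ 2 :=
    integral_nonneg hL.le fun r hr ↦ mul_nonneg hr.1 (sq_nonneg _)
  have mass_int : IntervalIntegrable (fun r ↦ (1 / (2 * a)) ^ 2 * (r * ‖ψ r‖ ^ 2)) volume 0 L :=
    ((continuousOn_id.mul (hψ.norm.pow 2)).intervalIntegrable_of_Icc hL.le).const_mul _
  calc 0 ≤ (∫ r in (0 : ℝ)..L, (r * ‖ψ' r‖ ^ 2 + 1 / 4 * (‖ψ r‖ ^ 2 / r))) -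
        (1 / (2 * a)) ^ 2 * ∫ r in (0 : ℝ)..L, r * ‖ψ r‖ ^ 2 := by
        rw [sub_nonneg]
        refine le_trans ?_
          (pi_div_sq_mul_integral_mul_norm_sq_le_radial_energy hL hψ hψ' hψ'c hψL hint)
        gcongr
    _ = _ := by
        rw [← intervalIntegral.integral_const_mul,
          ← integral_sub (intervalIntegrable_radial_energy hL.le hψ'c hint) mass_int]
        exact integral_congr fun r _ ↦ by ring

end RadialWeight

/-- Nonnegativity of the angular sections of the shifted quadratic form for the
Archimedean spiral region at small angles: for `a > 0`, `0 < L ≤ πa`, and `ψ`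
continuously differentiable on `[0,L]` with `ψ(L) = 0` and `r ↦ ψ(r)²/r` integrable
on `(0,L)`, one has `∫_0^L [ r ψ'(r)² + (1/(4r) − r/(4a²)) ψ(r)² ] dr ≥ 0`. -/
theorem angular_section_nonneg (a L : ℝ) (ha : 0 < a) (hL : 0 < L)
    (hLa : L ≤ π * a) (ψ ψ' : ℝ → ℝ)
    (hderiv : ∀ x ∈ Set.Icc 0 L, HasDerivAt ψ (ψ' x) x)
    (hψ'cont : ContinuousOn ψ' (Set.Icc 0 L))
    (hψL : ψ L = 0)
    (hint : IntegrableOn (fun r : ℝ => (ψ r) ^ 2 / r) (Set.Ioo 0 L)) :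
    (∫ r in (0:ℝ)..L,
      (r * (ψ' r) ^ 2 + (1 / (4 * r) - r / (4 * a ^ 2)) * (ψ r) ^ 2)) ≥ 0 := by
  have hint' := (intervalIntegrable_iff_integrableOn_Ioo_of_le hL.le).2 hint
  simpa using angular_section_nonneg_general hL (by linarith [mul_pos pi_pos ha])
    (HasDerivAt.continuousOn hderiv) (fun x hx ↦ hderiv x (Set.Ioo_subset_Icc_self hx))
    hψ'cont hψL (by simpa using hint')
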